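/- arXiv:1506.05719 — 14 statements merged into one kernel-verified Lean document; each statement's English description precedes it below -/
import Mathlib

section
/- If a (connected) graph G belongs to Free(claw, 4K_1, K_5−e, 5-wheel, C_5-twin, P_5-twin) and contains an induced cycle on seven vertices, then G has at most 21 vertices. -/
open SimpleGraph

/-- The claw `K_{1,3}`: vertex 0 adjacent to 1, 2, 3. -/
def claw : SimpleGraph (Fin 4) := SimpleGraph.fromRel (fun a _ => a = 0)

/-- `4K_1`: the edgeless graph on four vertices. -/
def fourK1 : SimpleGraph (Fin 4) := ⊥

/-- `K_5 - e`: the complete graph on five vertices minus the edge {0,1}. -/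
def K5e : SimpleGraph (Fin 5) :=
  SimpleGraph.fromRel (fun a b => ¬(a = 0 ∧ b = 1) ∧ ¬(a = 1 ∧ b = 0))

/-- The 5-wheel: the cycle 0-1-2-3-4-0 together with hub 5 adjacent to all. -/
def wheel5 : SimpleGraph (Fin 6) :=
  SimpleGraph.fromRel (fun a b =>
    (a ≠ 5 ∧ b ≠ 5 ∧ b.val = (a.val + 1) % 5) ∨ a = 5 ∨ b = 5)

/-- The `C_5`-twin: the cycle 0-1-2-3-4-0 together with vertex 5, a true twin
of vertex 0 (adjacent to 0, 1 and 4). -/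
def C5twin : SimpleGraph (Fin 6) :=
  SimpleGraph.fromRel (fun a b =>
    (a ≠ 5 ∧ b ≠ 5 ∧ b.val = (a.val + 1) % 5) ∨ (a = 5 ∧ (b = 0 ∨ b = 1 ∨ b = 4)))

/-- The `P_5`-twin: the path 0-1-2-3-4 together with vertex 5, a true twin of
the middle vertex 2 (adjacent to 1, 2 and 3). -/
def P5twin : SimpleGraph (Fin 6) :=
  SimpleGraph.fromRel (fun a b =>
    (a ≠ 5 ∧ b ≠ 5 ∧ b.val = a.val + 1) ∨ (a = 5 ∧ (b = 1 ∨ b = 2 ∨ b = 3)))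

/-- The chordless cycle on seven vertices. -/
def C7 : SimpleGraph (Fin 7) :=
  SimpleGraph.fromRel (fun a b => b.val = (a.val + 1) % 7)

/-- `G` is `H`-free: `G` contains no induced subgraph isomorphic to `H`,
i.e. there is no graph embedding of `H` into `G`. -/
def Free {V W : Type*} (G : SimpleGraph V) (H : SimpleGraph W) : Prop :=
  IsEmpty (H ↪g G)

/-- `X_i`: vertices outside the five-cycle `v 0, …, v 4` whose neighbours on the
cycle are exactly `v i` and `v (i+1)`. -/
def cycX {V : Type*} (G : SimpleGraph V) (v : ZMod 5 → V) (i : ZMod 5) : Set V :=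
  {w | w ∉ Set.range v ∧ ∀ j : ZMod 5, G.Adj w (v j) ↔ (j = i ∨ j = i + 1)}

/-- `Y_i`: vertices outside the five-cycle whose neighbours on the cycle are
exactly `v i, v (i+1), v (i+2), v (i+3)`. -/
def cycY {V : Type*} (G : SimpleGraph V) (v : ZMod 5 → V) (i : ZMod 5) : Set V :=
  {w | w ∉ Set.range v ∧
    ∀ j : ZMod 5, G.Adj w (v j) ↔ (j = i ∨ j = i + 1 ∨ j = i + 2 ∨ j = i + 3)}

/-- `R`: vertices outside the five-cycle with no neighbour on the cycle. -/
def cycR {V : Type*} (G : SimpleGraph V) (v : ZMod 5 → V) : Set V :=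
  {w | w ∉ Set.range v ∧ ∀ j : ZMod 5, ¬ G.Adj w (v j)}

/-- A map reflecting and preserving adjacency, injective, contradicts freeness. -/
lemma free_elim {V : Type*} {n : ℕ} {G : SimpleGraph V} {H : SimpleGraph (Fin n)}
    (h : _root_.Free G H) (f : Fin n → V)
    (hne : ∀ i j, i < j → f i ≠ f j)
    (hadj : ∀ i j, i < j → (G.Adj (f i) (f j) ↔ H.Adj i j)) : False := by
  refine h.false ⟨⟨f, ?_⟩, ?_⟩
  · intro i j hij
    rcases lt_trichotomy i j with hl | hl | hl
    · exact absurd hij (hne i j hl)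
    · exact hl
    · exact absurd hij.symm (hne j i hl)
  · intro i j
    change G.Adj (f i) (f j) ↔ H.Adj i j
    rcases lt_trichotomy i j with hl | hl | hl
    · exact hadj i j hl
    · subst hl; simp
    · rw [G.adj_comm, H.adj_comm]; exact hadj j i hl

lemma claw_elim {V : Type*} {G : SimpleGraph V} (h : _root_.Free G claw) {a b c d : V}
    (hab : G.Adj a b) (hac : G.Adj a c) (had : G.Adj a d)
    (nbc : b ≠ c) (nbd : b ≠ d) (ncd : c ≠ d)
    (hbc : ¬ G.Adj b c) (hbd : ¬ G.Adj b d) (hcd : ¬ G.Adj c d) : False := by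
  apply free_elim h ![a, b, c, d]
  · intro i j hij
    fin_cases i <;> fin_cases j <;> simp_all <;> simp_all [G.ne_of_adj]
  · intro i j hij
    fin_cases i <;> fin_cases j <;> simp_all [claw]

lemma fourK1_elim {V : Type*} {G : SimpleGraph V} (h : _root_.Free G fourK1) {a b c d : V}
    (nab : a ≠ b) (nac : a ≠ c) (nad : a ≠ d) (nbc : b ≠ c) (nbd : b ≠ d) (ncd : c ≠ d)
    (hab : ¬ G.Adj a b) (hac : ¬ G.Adj a c) (had : ¬ G.Adj a d)
    (hbc : ¬ G.Adj b c) (hbd : ¬ G.Adj b d) (hcd : ¬ G.Adj c d) : False := by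
  apply free_elim h ![a, b, c, d]
  · intro i j hij
    fin_cases i <;> fin_cases j <;> simp_all
  · intro i j hij
    fin_cases i <;> fin_cases j <;> simp_all [fourK1]

lemma K5e_elim {V : Type*} {G : SimpleGraph V} (h : _root_.Free G K5e) {a b c d e : V}
    (nab : a ≠ b) (hab : ¬ G.Adj a b)
    (hac : G.Adj a c) (had : G.Adj a d) (hae : G.Adj a e)
    (hbc : G.Adj b c) (hbd : G.Adj b d) (hbe : G.Adj b e)
    (hcd : G.Adj c d) (hce : G.Adj c e) (hde : G.Adj d e) : False := by
  have h1 := hac.ne; have h2 := had.ne; have h3 := hae.ne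
  have h4 := hbc.ne; have h5 := hbd.ne; have h6 := hbe.ne
  have h7 := hcd.ne; have h8 := hce.ne; have h9 := hde.ne
  apply free_elim h ![a, b, c, d, e]
  · intro i j hij
    fin_cases i <;> fin_cases j <;> simp_all
  · intro i j hij
    fin_cases i <;> fin_cases j <;> simp_all [K5e]

lemma C5twin_elim {V : Type*} {G : SimpleGraph V} (h : _root_.Free G C5twin) {a b c d e f : V}
    (hab : G.Adj a b) (hbc : G.Adj b c) (hcd : G.Adj c d) (hde : G.Adj d e) (hae : G.Adj a e)
    (hac : ¬ G.Adj a c) (had : ¬ G.Adj a d) (hbd : ¬ G.Adj b d) (hbe : ¬ G.Adj b e)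
    (hce : ¬ G.Adj c e)
    (haf : G.Adj a f) (hbf : G.Adj b f) (hef : G.Adj e f)
    (hcf : ¬ G.Adj c f) (hdf : ¬ G.Adj d f) : False := by
  have h1 := hab.ne; have h2 := hbc.ne; have h3 := hcd.ne; have h4 := hde.ne
  have h5 := hae.ne; have h6 := haf.ne; have h7 := hbf.ne; have h8 := hef.ne
  have n1 : a ≠ c := by rintro rfl; exact had hcd
  have n2 : a ≠ d := by rintro rfl; exact hbd hab.symm
  have n3 : b ≠ d := by rintro rfl; exact had hab
  have n4 : b ≠ e := by rintro rfl; exact hbd hde.symm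
  have n5 : c ≠ e := by rintro rfl; exact hac hae
  have n6 : c ≠ f := by rintro rfl; exact hac haf
  have n7 : d ≠ f := by rintro rfl; exact had haf
  apply free_elim h ![a, b, c, d, e, f]
  · intro i j hij
    fin_cases i <;> fin_cases j <;> first | (exfalso; revert hij; decide) | assumption
  · intro i j hij
    fin_cases i <;> fin_cases j <;>
      first
      | (exfalso; revert hij; decide)
      | exact iff_of_true (by assumption) (by simp [C5twin])
      | exact iff_of_false (by assumption) (by simp [C5twin])

lemma P5twin_elim {V : Type*} {G : SimpleGraph V} (h : _root_.Free G P5twin) {a b c d e f : V}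
    (hab : G.Adj a b) (hbc : G.Adj b c) (hcd : G.Adj c d) (hde : G.Adj d e)
    (hac : ¬ G.Adj a c) (had : ¬ G.Adj a d) (hae : ¬ G.Adj a e)
    (hbd : ¬ G.Adj b d) (hbe : ¬ G.Adj b e) (hce : ¬ G.Adj c e)
    (haf : ¬ G.Adj a f) (hbf : G.Adj b f) (hcf : G.Adj c f) (hdf : G.Adj d f)
    (hef : ¬ G.Adj e f) : False := by
  have h1 := hab.ne; have h2 := hbc.ne; have h3 := hcd.ne; have h4 := hde.ne
  have h6 := hcf.ne; have h7 := hbf.ne; have h8 := hdf.ne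
  have n1 : a ≠ c := by rintro rfl; exact had hcd
  have n2 : a ≠ d := by rintro rfl; exact hae hde
  have n8 : a ≠ e := by rintro rfl; exact hbe hab.symm
  have n3 : b ≠ d := by rintro rfl; exact had hab
  have n4 : b ≠ e := by rintro rfl; exact hae hab
  have n5 : c ≠ e := by rintro rfl; exact hbe hbc
  have n6 : a ≠ f := by rintro rfl; exact hac hcf.symm
  have n7 : e ≠ f := by rintro rfl; exact hce hcf
  apply free_elim h ![a, b, c, d, e, f]
  · intro i j hij
    fin_cases i <;> fin_cases j <;> first | (exfalso; revert hij; decide) | assumption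
  · intro i j hij
    fin_cases i <;> fin_cases j <;>
      first
      | (exfalso; revert hij; decide)
      | exact iff_of_true (by assumption) (by simp [P5twin])
      | exact iff_of_false (by assumption) (by simp [P5twin])

/-- The possible neighbourhood patterns on the seven-cycle of an outside vertex. -/
lemma pattern_classify : ∀ p : Fin 7 → Bool,
    (∀ i, p i = true → p (i + 6) = true ∨ p (i + 1) = true) →
    (∀ i, ¬ (p i = true ∧ p (i + 2) = true ∧ p (i + 4) = true)) →
    (∀ i, p i = true ∨ p (i + 2) = true ∨ p (i + 4) = true) →
    (∀ i, ¬ (p i = false ∧ p (i + 1) = true ∧ p (i + 2) = true ∧ p (i + 3) = true ∧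
      p (i + 4) = false)) →
    ∃ i, (∀ j, p j = true ↔ (j = i ∨ j = i + 1 ∨ j = i + 2 ∨ j = i + 3)) ∨
      (∀ j, p j = true ↔ (j = i ∨ j = i + 1 ∨ j = i + 3 ∨ j = i + 4)) := by
  decide +kernel

/-- The class relation: cycle vertices, four consecutive neighbours, or two disjoint edges. -/
def clsRel {V : Type*} (G : SimpleGraph V) (v : Fin 7 → V) (w : V) (k : Fin 3) (i : Fin 7) : Prop :=
  (k = 0 ∧ w = v i) ∨
  (k = 1 ∧ w ∉ Set.range v ∧
    ∀ j, G.Adj w (v j) ↔ (j = i ∨ j = i + 1 ∨ j = i + 2 ∨ j = i + 3)) ∨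
  (k = 2 ∧ w ∉ Set.range v ∧
    ∀ j, G.Adj w (v j) ↔ (j = i ∨ j = i + 1 ∨ j = i + 3 ∨ j = i + 4))

theorem stmt_0
    {V : Type*} [Fintype V] (G : SimpleGraph V)
    (hconn : G.Connected)
    (hclaw : _root_.Free G claw) (h4K1 : _root_.Free G fourK1) (hK5e : _root_.Free G K5e)
    (hW5 : _root_.Free G wheel5) (hC5t : _root_.Free G C5twin) (hP5t : _root_.Free G P5twin)
    (hC7 : Nonempty (C7 ↪g G)) :
    Fintype.card V ≤ 21 := by
  classical
  obtain ⟨φ⟩ := hC7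
  obtain ⟨v, hinj, hv⟩ : ∃ v : Fin 7 → V, Function.Injective v ∧
      ∀ i j, G.Adj (v i) (v j) ↔ (j = i + 1 ∨ i = j + 1) := by
    refine ⟨φ, φ.injective, fun i j => ?_⟩
    rw [φ.map_adj_iff]
    unfold C7
    rw [SimpleGraph.fromRel_adj]
    revert i j
    decide
  -- adjacency and distinctness of cycle vertices at given offsets
  have adj1 : ∀ i a b : Fin 7, (b = a + 1 ∨ a = b + 1) → G.Adj (v (i + a)) (v (i + b)) := by
    intro i a b h
    rw [hv]
    revert i a b
    decide
  have nadj : ∀ i a b : Fin 7, ¬ (b = a + 1 ∨ a = b + 1) → ¬ G.Adj (v (i + a)) (v (i + b)) := by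
    intro i a b h
    rw [hv]
    revert i a b
    decide
  have vne : ∀ i a b : Fin 7, a ≠ b → v (i + a) ≠ v (i + b) := by
    intro i a b h h'
    exact h (add_left_cancel (hinj h'))
  have ex : ∀ w, ∃ p : Fin 3 × Fin 7, clsRel G v w p.1 p.2 := by
    intro w
    by_cases hw : w ∈ Set.range v
    · obtain ⟨i, rfl⟩ := hw
      exact ⟨(0, i), Or.inl ⟨rfl, rfl⟩⟩
    have wne : ∀ i, w ≠ v i := fun i h => hw ⟨i, h.symm⟩
    obtain ⟨i, hi⟩ := pattern_classify (fun i => decide (G.Adj w (v i)))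
      (by
        intro i h
        simp only [decide_eq_true_eq] at h ⊢
        by_contra! hc
        have a1 := adj1 i 0 6 (by decide)
        have a2 := adj1 i 0 1 (by decide)
        rw [add_zero] at a1 a2
        exact claw_elim hclaw a1 a2 h.symm (vne i 6 1 (by decide)) (wne _).symm (wne _).symm
          (nadj i 6 1 (by decide)) (fun h => hc.1 h.symm) (fun h => hc.2 h.symm))
      (by
        intro i h
        simp only [decide_eq_true_eq] at h
        have n1 := nadj i 0 2 (by decide)
        have n2 := nadj i 0 4 (by decide)
        have m1 := vne i 0 2 (by decide)
        have m2 := vne i 0 4 (by decide)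
        rw [add_zero] at n1 n2 m1 m2
        exact claw_elim hclaw h.1 h.2.1 h.2.2 m1 m2 (vne i 2 4 (by decide)) n1 n2
          (nadj i 2 4 (by decide)))
      (by
        intro i
        simp only [decide_eq_true_eq]
        by_contra! h
        have n1 := nadj i 0 2 (by decide)
        have n2 := nadj i 0 4 (by decide)
        have m1 := vne i 0 2 (by decide)
        have m2 := vne i 0 4 (by decide)
        rw [add_zero] at n1 n2 m1 m2
        exact fourK1_elim h4K1 (wne _) (wne _) (wne _) m1 m2 (vne i 2 4 (by decide))
          h.1 h.2.1 h.2.2 n1 n2 (nadj i 2 4 (by decide)))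
      (by
        intro i h
        simp only [decide_eq_true_eq, decide_eq_false_iff_not] at h
        obtain ⟨h0, h1, h2, h3, h4⟩ := h
        have b1 := adj1 i 0 1 (by decide)
        have b2 := nadj i 0 2 (by decide)
        have b3 := nadj i 0 3 (by decide)
        have b4 := nadj i 0 4 (by decide)
        rw [add_zero] at b1 b2 b3 b4
        exact P5twin_elim hP5t b1 (adj1 i 1 2 (by decide)) (adj1 i 2 3 (by decide))
          (adj1 i 3 4 (by decide)) b2 b3 b4 (nadj i 1 3 (by decide)) (nadj i 1 4 (by decide))
          (nadj i 2 4 (by decide)) (fun h => h0 h.symm) h1.symm h2.symm h3.symm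
          (fun h => h4 h.symm))
    simp only [decide_eq_true_eq] at hi
    rcases hi with hi | hi
    · exact ⟨(1, i), Or.inr (Or.inl ⟨rfl, hw, hi⟩)⟩
    · exact ⟨(2, i), Or.inr (Or.inr ⟨rfl, hw, hi⟩)⟩
  -- each class contains at most one vertex
  have uniq : ∀ x y k i, clsRel G v x k i → clsRel G v y k i → x = y := by
    intro x y k i hx hy
    by_contra hxy
    rcases hx with ⟨rfl, hx⟩ | ⟨rfl, hxr, hx⟩ | ⟨rfl, hxr, hx⟩
    · rcases hy with ⟨-, hy⟩ | ⟨h, -⟩ | ⟨h, -⟩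
      · exact hxy (hx.trans hy.symm)
      · revert h; decide
      · revert h; decide
    · rcases hy with ⟨h, -⟩ | ⟨-, hyr, hy⟩ | ⟨h, -⟩
      · revert h; decide
      · have x1 := (hx (i + 1)).2 (by simp)
        have x2 := (hx (i + 2)).2 (by simp)
        have x3 := (hx (i + 3)).2 (by simp)
        have y1 := (hy (i + 1)).2 (by simp)
        have y2 := (hy (i + 2)).2 (by simp)
        have y3 := (hy (i + 3)).2 (by simp)
        have x4 : ¬ G.Adj x (v (i + 4)) := by
          rw [hx]; clear * -; revert i; decide
        have y4 : ¬ G.Adj y (v (i + 4)) := by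
          rw [hy]; clear * -; revert i; decide
        by_cases hadj : G.Adj x y
        · exact K5e_elim hK5e (vne i 1 3 (by decide)) (nadj i 1 3 (by decide))
            (adj1 i 1 2 (by decide)) x1.symm y1.symm (adj1 i 3 2 (by decide)) x3.symm y3.symm
            x2.symm y2.symm hadj
        · exact claw_elim hclaw x3.symm y3.symm (adj1 i 3 4 (by decide)) hxy
            (fun h => hxr ⟨_, h.symm⟩) (fun h => hyr ⟨_, h.symm⟩) hadj x4 y4
      · revert h; decide
    · rcases hy with ⟨h, -⟩ | ⟨h, -⟩ | ⟨-, hyr, hy⟩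
      · revert h; decide
      · revert h; decide
      · have x0 := (hx (i + 0)).2 (by simp)
        have y0 := (hy (i + 0)).2 (by simp)
        have x1 := (hx (i + 1)).2 (by simp)
        have y1 := (hy (i + 1)).2 (by simp)
        have x4 := (hx (i + 4)).2 (by simp)
        have y4 := (hy (i + 4)).2 (by simp)
        have x2 : ¬ G.Adj x (v (i + 2)) := by
          rw [hx]; clear * -; revert i; decide
        have y2 : ¬ G.Adj y (v (i + 2)) := by
          rw [hy]; clear * -; revert i; decide
        have x5 : ¬ G.Adj x (v (i + 5)) := by
          rw [hx]; clear * -; revert i; decide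
        have y5 : ¬ G.Adj y (v (i + 5)) := by
          rw [hy]; clear * -; revert i; decide
        have x6 : ¬ G.Adj x (v (i + 6)) := by
          rw [hx]; clear * -; revert i; decide
        have y6 : ¬ G.Adj y (v (i + 6)) := by
          rw [hy]; clear * -; revert i; decide
        by_cases hadj : G.Adj x y
        · exact C5twin_elim hC5t x4 (adj1 i 4 5 (by decide)) (adj1 i 5 6 (by decide))
            (adj1 i 6 0 (by decide)) x0 x5 x6 (nadj i 4 6 (by decide)) (nadj i 4 0 (by decide))
            (nadj i 5 0 (by decide)) hadj y4.symm y0.symm (fun h => y5 h.symm)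
            (fun h => y6 h.symm)
        · exact claw_elim hclaw x1.symm y1.symm (adj1 i 1 2 (by decide)) hxy
            (fun h => hxr ⟨_, h.symm⟩) (fun h => hyr ⟨_, h.symm⟩) hadj x2 y2
  choose f hf using ex
  have hfi : Function.Injective f := by
    intro x y hxy
    have h2 := hf y
    rw [← hxy] at h2
    exact uniq x y _ _ (hf x) h2
  simpa using Fintype.card_le_of_injective f hfi
end

section
/- No vertex of G outside the cycle C has exactly 1, exactly 3, or exactly 5 neighbors among the five vertices of C. -/
open SimpleGraph

/-- Any neighbour of `v i` off the cycle is adjacent to a cycle-neighbour of `v i`. -/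
theorem aux_claw {V : Type*} (G : SimpleGraph V) (hclaw : _root_.Free G claw)
    (v : ZMod 5 → V)
    (hC : ∀ i j : ZMod 5, G.Adj (v i) (v j) ↔ (j = i + 1 ∨ i = j + 1))
    (hv : Function.Injective v) (w : V) (hw : ∀ i, v i ≠ w) (i : ZMod 5)
    (h : G.Adj w (v i)) : G.Adj w (v (i + 1)) ∨ G.Adj w (v (i + 4)) := by
  by_contra hn
  push Not at hn
  obtain ⟨h1, h2⟩ := hn
  have h' := h.symm
  have h1' : ¬ G.Adj (v (i + 1)) w := fun a => h1 (G.adj_symm a)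
  have h2' : ¬ G.Adj (v (i + 4)) w := fun a => h2 (G.adj_symm a)
  have hw' := fun i => (hw i).symm
  refine hclaw.false ⟨⟨![v i, v (i + 1), v (i + 4), w], ?_⟩, ?_⟩
  · intro a b
    fin_cases a <;> fin_cases b <;> simp [hv.eq_iff, hw, hw'] <;> clear * - <;> decide
  · intro a b
    change G.Adj (![v i, v (i + 1), v (i + 4), w] a) (![v i, v (i + 1), v (i + 4), w] b) ↔ _
    fin_cases a <;> fin_cases b <;> simp [claw, hC, h, h', h1, h2, h1', h2'] <;>
      clear * - i <;> revert i <;> decide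

/-- A six-vertex pattern extending the cycle by one vertex is induced in `G`. -/
theorem aux_six {V : Type*} (G : SimpleGraph V) (H : SimpleGraph (Fin 6))
    (hH : _root_.Free G H)
    (v : ZMod 5 → V) (hv : Function.Injective v)
    (hC : ∀ i j : ZMod 5, G.Adj (v i) (v j) ↔ (j = i + 1 ∨ i = j + 1))
    (w : V) (hw : ∀ i, v i ≠ w) (i : ZMod 5)
    (hcyc : ∀ a b : Fin 5, H.Adj a.castSucc b.castSucc ↔
      (b.val = (a.val + 1) % 5 ∨ a.val = (b.val + 1) % 5))
    (hlast : ∀ a : Fin 5, H.Adj (Fin.last 5) a.castSucc ↔ G.Adj w (v (i + (a.val : ZMod 5)))) :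
    False := by
  have hw' := fun i => (hw i).symm
  obtain ⟨f, hfc, hfl⟩ : ∃ f : Fin 6 → V,
      (∀ a : Fin 5, f a.castSucc = v (i + (a.val : ZMod 5))) ∧ f (Fin.last 5) = w :=
    ⟨Fin.snoc (α := fun _ => V) (fun a : Fin 5 => v (i + (a.val : ZMod 5))) w,
      fun a => Fin.snoc_castSucc (α := fun _ => V) _ _ a,
      Fin.snoc_last (α := fun _ => V) _ _⟩
  have hinj : Function.Injective f := by
    intro a b
    induction a using Fin.lastCases with
    | last =>
      induction b using Fin.lastCases with
      | last => exact fun _ => rfl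
      | cast b =>
        rw [hfc, hfl]
        exact fun h => absurd h (hw' _)
    | cast a =>
      induction b using Fin.lastCases with
      | last =>
        rw [hfc, hfl]
        exact fun h => absurd h (hw _)
      | cast b =>
        rw [hfc, hfc, hv.eq_iff, Fin.castSucc_inj]
        clear * -
        revert i a b
        decide
  refine hH.false ⟨⟨f, hinj⟩, ?_⟩
  intro a b
  change G.Adj (f a) (f b) ↔ _
  induction a using Fin.lastCases with
  | last =>
    induction b using Fin.lastCases with
    | last => exact ⟨fun h => absurd h (G.irrefl), fun h => absurd h (H.irrefl)⟩
    | cast b => rw [hfc, hfl, hlast]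
  | cast a =>
    induction b using Fin.lastCases with
    | last => rw [hfc, hfl, H.adj_comm, hlast, G.adj_comm]
    | cast b =>
      rw [hfc, hfc, hC, hcyc]
      clear * -
      revert i a b
      decide

/-- The finite combinatorial core: odd subsets of `ZMod 5`. -/
theorem aux_comb : ∀ S : Finset (ZMod 5),
    (∀ i ∈ S, i + 1 ∈ S ∨ i + 4 ∈ S) →
    (∀ i, ¬ (i ∈ S ∧ i + 1 ∈ S ∧ i + 2 ∉ S ∧ i + 3 ∉ S ∧ i + 4 ∈ S)) →
    (¬ ∀ i, i ∈ S) → S.card ≠ 1 ∧ S.card ≠ 3 ∧ S.card ≠ 5 := by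
  decide

theorem stmt_1     {V : Type*} [Fintype V] (G : SimpleGraph V)
    (hconn : G.Connected)
    (hclaw : _root_.Free G claw) (h4K1 : _root_.Free G fourK1) (hK5e : _root_.Free G K5e)
    (hW5 : _root_.Free G wheel5) (hC5t : _root_.Free G C5twin) (hP5t : _root_.Free G P5twin)
    (v : ZMod 5 → V) (hv : Function.Injective v)
    (hC : ∀ i j : ZMod 5, G.Adj (v i) (v j) ↔ (j = i + 1 ∨ i = j + 1)) :
    ∀ w : V, w ∉ Set.range v →
      {i : ZMod 5 | G.Adj w (v i)}.ncard ≠ 1 ∧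
      {i : ZMod 5 | G.Adj w (v i)}.ncard ≠ 3 ∧
      {i : ZMod 5 | G.Adj w (v i)}.ncard ≠ 5 := by
  intro w hw
  classical
  have hw' : ∀ i, v i ≠ w := fun i h => hw ⟨i, h⟩
  have key := aux_comb (Finset.univ.filter fun i => G.Adj w (v i))
  have hs : {i : ZMod 5 | G.Adj w (v i)} =
      ((Finset.univ.filter fun i => G.Adj w (v i) : Finset (ZMod 5)) : Set (ZMod 5)) := by
    ext i
    simp
  rw [hs, Set.ncard_coe_finset]
  simp only [Finset.mem_filter, Finset.mem_univ, true_and] at key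
  refine key (fun i => aux_claw G hclaw v hC hv w hw' i) ?_ ?_
  · rintro i ⟨h0, h1, h2, h3, h4⟩
    refine aux_six G C5twin hC5t v hv hC w hw' i ?_ ?_
    · unfold C5twin
      simp only [SimpleGraph.fromRel_adj]
      decide
    · intro a
      have hT : ∀ a : Fin 5, C5twin.Adj (Fin.last 5) a.castSucc ↔ (a = 0 ∨ a = 1 ∨ a = 4) := by
        unfold C5twin
        simp only [SimpleGraph.fromRel_adj]
        decide
      rw [hT]
      fin_cases a <;> simp [h0, h1, h2, h3, h4]
  · intro h
    refine aux_six G wheel5 hW5 v hv hC w hw' 0 ?_ ?_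
    · unfold wheel5
      simp only [SimpleGraph.fromRel_adj]
      decide
    · intro a
      have hT : ∀ a : Fin 5, wheel5.Adj (Fin.last 5) a.castSucc := by
        unfold wheel5
        simp only [SimpleGraph.fromRel_adj]
        decide
      exact iff_of_true (hT a) (h _)
end

section
/- For every i, the set Y_i contains at most one vertex, i.e., there is at most one vertex outside C whose neighbors on C are exactly v_i, v_{i+1}, v_{i+2}, v_{i+3}. -/
open SimpleGraph

/-- A vertex map that is injective and preserves and reflects adjacency refutes freeness. -/
theorem not_free_of_map {V W : Type*} {G : SimpleGraph V} {H : SimpleGraph W}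
    (h : _root_.Free G H) (f : W → V) (hf : Function.Injective f)
    (hadj : ∀ a b, G.Adj (f a) (f b) ↔ H.Adj a b) : False :=
  h.false ⟨⟨f, hf⟩, fun {a b} => hadj a b⟩

theorem stmt_2     {V : Type*} [Fintype V] (G : SimpleGraph V)
    (hconn : G.Connected)
    (hclaw : _root_.Free G claw) (h4K1 : _root_.Free G fourK1) (hK5e : _root_.Free G K5e)
    (hW5 : _root_.Free G wheel5) (hC5t : _root_.Free G C5twin) (hP5t : _root_.Free G P5twin)
    (v : ZMod 5 → V) (hv : Function.Injective v)
    (hC : ∀ i j : ZMod 5, G.Adj (v i) (v j) ↔ (j = i + 1 ∨ i = j + 1)) :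
    ∀ i : ZMod 5, (cycY G v i).Subsingleton := by
  rintro i x ⟨hx, hxa⟩ y ⟨hy, hya⟩
  by_contra hne
  have d : ∀ i : ZMod 5, i + 1 ≠ i ∧ i + 2 ≠ i ∧ i + 4 ≠ i ∧ i + 2 = i + 1 + 1 ∧ i + 4 ≠ i + 1 ∧
      i + 4 ≠ i + 2 ∧ i + 4 ≠ i + 3 ∧ i = i + 4 + 1 ∧ i + 1 ≠ i + 2 ∧ i + 2 ≠ i + 1 ∧
      i ≠ i + 2 + 1 := by
    decide
  obtain ⟨d1, d2, d3, d4, d5, d6, d7, d8, d9, d10, d11⟩ := d i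
  have x0 : G.Adj x (v i) := (hxa _).2 (by simp)
  have x1 : G.Adj x (v (i + 1)) := (hxa _).2 (by simp)
  have x2 : G.Adj x (v (i + 2)) := (hxa _).2 (by simp)
  have x4 : ¬ G.Adj x (v (i + 4)) := fun h => by
    have := (hxa _).1 h
    tauto
  have y0 : G.Adj y (v i) := (hya _).2 (by simp)
  have y1 : G.Adj y (v (i + 1)) := (hya _).2 (by simp)
  have y2 : G.Adj y (v (i + 2)) := (hya _).2 (by simp)
  have y4 : ¬ G.Adj y (v (i + 4)) := fun h => by
    have := (hya _).1 h
    tauto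
  have c01 : G.Adj (v i) (v (i + 1)) := (hC _ _).2 (by simp)
  have c12 : G.Adj (v (i + 1)) (v (i + 2)) := (hC _ _).2 (Or.inl d4)
  have c04 : G.Adj (v i) (v (i + 4)) := (hC _ _).2 (Or.inr d8)
  have c02 : ¬ G.Adj (v i) (v (i + 2)) := fun h => by
    rcases (hC _ _).1 h with h | h
    · exact d10 h
    · exact d11 h
  have n02 : v i ≠ v (i + 2) := fun h => d2 (hv h).symm
  have nx4 : x ≠ v (i + 4) := fun h => hx ⟨_, h.symm⟩
  have ny4 : y ≠ v (i + 4) := fun h => hy ⟨_, h.symm⟩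
  by_cases hxy : G.Adj x y
  · -- `x, y, v i, v (i+1), v (i+2)` induce `K_5 - e`
    refine not_free_of_map hK5e ![v i, v (i + 2), v (i + 1), x, y] ?_ ?_
    · intro a b hab
      fin_cases a <;> fin_cases b <;>
        first | rfl | (exfalso; revert hab; simp [hne, n02, x0.ne, x1.ne, x2.ne, y0.ne, y1.ne, y2.ne, x0.ne', x1.ne', x2.ne', y0.ne',
          y1.ne', y2.ne', c01.ne, c01.ne', c12.ne, c12.ne', n02.symm, Ne.symm hne])
    · intro a b
      fin_cases a <;> fin_cases b <;>
        simp [K5e, x0, x1, x2, y0, y1, y2, x0.symm, x1.symm, x2.symm, y0.symm, y1.symm,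
          y2.symm, c01, c01.symm, c12, c12.symm, c02, G.adj_comm (v (i + 2)) (v i), hxy, hxy.symm]
  · -- `v i` is the centre of a claw with leaves `v (i+4), x, y`
    refine not_free_of_map hclaw ![v i, v (i + 4), x, y] ?_ ?_
    · intro a b hab
      fin_cases a <;> fin_cases b <;>
        first | rfl | (exfalso; revert hab; simp [hne, nx4, ny4, x0.ne, y0.ne, x0.ne', y0.ne', c04.ne, c04.ne', nx4.symm, ny4.symm, Ne.symm hne])
    · intro a b
      fin_cases a <;> fin_cases b <;>
        simp [claw, x0, y0, x0.symm, y0.symm, c04, c04.symm, x4, y4, G.adj_comm (v (i + 4)) x,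
          G.adj_comm (v (i + 4)) y, hxy, G.adj_comm y x]
end

section
/- For every i, there is no edge between Y_i and Y_{i+1}: if y_1 is a vertex outside C whose neighbors on C are exactly v_i, v_{i+1}, v_{i+2}, v_{i+3}, and y_2 is a vertex outside C whose neighbors on C are exactly v_{i+1}, v_{i+2}, v_{i+3}, v_{i+4}, then y_1 and y_2 are non-adjacent. -/
open SimpleGraph

theorem stmt_3     {V : Type*} [Fintype V] (G : SimpleGraph V)
    (hconn : G.Connected)
    (hclaw : _root_.Free G claw) (h4K1 : _root_.Free G fourK1) (hK5e : _root_.Free G K5e)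
    (hW5 : _root_.Free G wheel5) (hC5t : _root_.Free G C5twin) (hP5t : _root_.Free G P5twin)
    (v : ZMod 5 → V) (hv : Function.Injective v)
    (hC : ∀ i j : ZMod 5, G.Adj (v i) (v j) ↔ (j = i + 1 ∨ i = j + 1)) :
    ∀ i : ZMod 5, ∀ y₁ ∈ cycY G v i, ∀ y₂ ∈ cycY G v (i + 1), ¬ G.Adj y₁ y₂ := by
  intro i y₁ h₁ y₂ h₂ hadj
  obtain ⟨-, h₁⟩ := h₁
  obtain ⟨-, h₂⟩ := h₂
  -- the vertices v (i+1), v (i+3), v (i+2), y₁, y₂ induce K5 - e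
  have a1 : G.Adj y₁ (v (i + 1)) := (h₁ _).2 (by simp)
  have a2 : G.Adj y₁ (v (i + 2)) := (h₁ _).2 (by simp)
  have a3 : G.Adj y₁ (v (i + 3)) := (h₁ _).2 (by simp)
  have b1 : G.Adj y₂ (v (i + 1)) := (h₂ _).2 (by clear * -; revert i; decide)
  have b2 : G.Adj y₂ (v (i + 2)) := (h₂ _).2 (by clear * -; revert i; decide)
  have b3 : G.Adj y₂ (v (i + 3)) := (h₂ _).2 (by clear * -; revert i; decide)
  have c12 : G.Adj (v (i + 1)) (v (i + 2)) := (hC _ _).2 (by clear * -; revert i; decide)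
  have c23 : G.Adj (v (i + 2)) (v (i + 3)) := (hC _ _).2 (by clear * -; revert i; decide)
  have c13 : ¬ G.Adj (v (i + 1)) (v (i + 3)) := fun h =>
    absurd ((hC _ _).1 h) (by clear * -; revert i; decide)
  have n13 : v (i + 1) ≠ v (i + 3) := fun h =>
    absurd (hv h) (by clear * -; revert i; decide)
  refine hK5e.false ⟨⟨![v (i + 1), v (i + 3), v (i + 2), y₁, y₂], ?_⟩, ?_⟩
  · intro a b
    fin_cases a <;> fin_cases b <;>
      simp [n13, n13.symm, a1.ne, a2.ne, a3.ne, b1.ne, b2.ne, b3.ne, c12.ne, c23.ne, hadj.ne,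
        a1.ne', a2.ne', a3.ne', b1.ne', b2.ne', b3.ne', c12.ne', c23.ne', hadj.ne']
  · intro a b
    change G.Adj (![v (i + 1), v (i + 3), v (i + 2), y₁, y₂] a)
      (![v (i + 1), v (i + 3), v (i + 2), y₁, y₂] b) ↔ K5e.Adj a b
    have c31 : ¬ G.Adj (v (i + 3)) (v (i + 1)) := fun h => c13 h.symm
    fin_cases a <;> fin_cases b <;>
      simp [K5e, c13, c31, a1, a2, a3, b1, b2, b3, c12, c23, hadj,
        a1.symm, a2.symm, a3.symm, b1.symm, b2.symm, b3.symm, c12.symm, c23.symm, hadj.symm]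
end

section
/- For every i, every vertex of X_i is adjacent to every vertex of Y_i and to every vertex of Y_{i+3}. -/
open SimpleGraph

lemma claw_aux {V : Type*} (G : SimpleGraph V) (hclaw : _root_.Free G claw) {c a b d : V}
    (ha : G.Adj c a) (hb : G.Adj c b) (hd : G.Adj c d) (hab : ¬ G.Adj a b) (had : ¬ G.Adj a d)
    (hbd : ¬ G.Adj b d) (nab : a ≠ b) (nad : a ≠ d) (nbd : b ≠ d) : False := by
  have h1 := ha.ne
  have h2 := hb.ne
  have h3 := hd.ne
  have hab' := fun h => hab (G.adj_symm h)
  have had' := fun h => had (G.adj_symm h)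
  have hbd' := fun h => hbd (G.adj_symm h)
  refine hclaw.false ⟨⟨![c, a, b, d], ?_⟩, ?_⟩
  · intro p q h
    fin_cases p <;> fin_cases q <;> simp_all
  · intro p q
    change G.Adj (![c, a, b, d] p) (![c, a, b, d] q) ↔ claw.Adj p q
    have ha' := ha.symm
    have hb' := hb.symm
    have hd' := hd.symm
    clear hclaw
    fin_cases p <;> fin_cases q <;> simp_all [claw, SimpleGraph.fromRel_adj]

theorem stmt_4     {V : Type*} [Fintype V] (G : SimpleGraph V)
    (hconn : G.Connected)
    (hclaw : _root_.Free G claw) (h4K1 : _root_.Free G fourK1) (hK5e : _root_.Free G K5e)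
    (hW5 : _root_.Free G wheel5) (hC5t : _root_.Free G C5twin) (hP5t : _root_.Free G P5twin)
    (v : ZMod 5 → V) (hv : Function.Injective v)
    (hC : ∀ i j : ZMod 5, G.Adj (v i) (v j) ↔ (j = i + 1 ∨ i = j + 1)) :
    ∀ i : ZMod 5, ∀ x ∈ cycX G v i, ∀ y ∈ cycY G v i ∪ cycY G v (i + 3), G.Adj x y := by
  intro i x hx y hy
  obtain ⟨hxr, hx⟩ := hx
  by_contra hxy
  have hxy' : x ≠ y := by
    rintro rfl
    have h3 : G.Adj x (v (i + 3)) := by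
      rcases hy with ⟨_, hy⟩ | ⟨_, hy⟩ <;> rw [hy] <;> simp
    rw [hx] at h3
    clear * - h3
    revert i
    decide
  have hxv : ∀ j, x ≠ v j := fun j h => hxr ⟨j, h.symm⟩
  rcases hy with ⟨hyr, hy⟩ | ⟨hyr, hy⟩
  · refine claw_aux G hclaw (c := v i) (a := x) (b := y) (d := v (i + 4))
      ?_ ?_ ?_ hxy ?_ ?_ hxy' (hxv _) (fun h => hyr ⟨_, h.symm⟩)
    · rw [G.adj_comm, hx]; simp
    · rw [G.adj_comm, hy]; simp
    · rw [hC]; clear * -; revert i; decide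
    · rw [hx]; clear * -; revert i; decide
    · rw [hy]; clear * -; revert i; decide
  · refine claw_aux G hclaw (c := v (i + 1)) (a := x) (b := y) (d := v (i + 2))
      ?_ ?_ ?_ hxy ?_ ?_ hxy' (hxv _) (fun h => hyr ⟨_, h.symm⟩)
    · rw [G.adj_comm, hx]; simp
    · rw [G.adj_comm, hy]; clear * -; revert i; decide
    · rw [hC]; clear * -; revert i; decide
    · rw [hx]; clear * -; revert i; decide
    · rw [hy]; clear * -; revert i; decide
end

section
/- For every i, there is no edge between X_i and Y_{i+1} ∪ Y_{i+2} ∪ Y_{i+4}: every vertex of X_i is non-adjacent to every vertex of Y_{i+1}, of Y_{i+2}, and of Y_{i+4}. -/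
open SimpleGraph

/-- A vertex with three pairwise nonadjacent distinct neighbours gives an induced claw. -/
theorem no_claw {V : Type*} (G : SimpleGraph V) (hclaw : _root_.Free G claw) (c p q r : V)
    (hp : G.Adj c p) (hq : G.Adj c q) (hr : G.Adj c r)
    (hpq : ¬ G.Adj p q) (hpr : ¬ G.Adj p r) (hqr : ¬ G.Adj q r)
    (npq : p ≠ q) (npr : p ≠ r) (nqr : q ≠ r) : False := by
  refine hclaw.false ⟨⟨![c, p, q, r], ?_⟩, ?_⟩
  · intro a b h
    have := hp.ne
    have := hq.ne
    have := hr.ne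
    fin_cases a <;> fin_cases b <;> simp_all [eq_comm]
  · intro a b
    have hpq' : ¬ G.Adj q p := fun h => hpq h.symm
    have hpr' : ¬ G.Adj r p := fun h => hpr h.symm
    have hqr' : ¬ G.Adj r q := fun h => hqr h.symm
    change G.Adj (![c, p, q, r] a) (![c, p, q, r] b) ↔ claw.Adj a b
    fin_cases a <;> fin_cases b <;>
      simp [claw, hp, hq, hr, hpq, hpr, hqr, hp.symm, hq.symm, hr.symm, hpq', hpr', hqr']

theorem stmt_6     {V : Type*} [Fintype V] (G : SimpleGraph V)
    (hconn : G.Connected)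
    (hclaw : _root_.Free G claw) (h4K1 : _root_.Free G fourK1) (hK5e : _root_.Free G K5e)
    (hW5 : _root_.Free G wheel5) (hC5t : _root_.Free G C5twin) (hP5t : _root_.Free G P5twin)
    (v : ZMod 5 → V) (hv : Function.Injective v)
    (hC : ∀ i j : ZMod 5, G.Adj (v i) (v j) ↔ (j = i + 1 ∨ i = j + 1)) :
    ∀ i : ZMod 5, ∀ x ∈ cycX G v i,
      ∀ y ∈ cycY G v (i + 1) ∪ cycY G v (i + 2) ∪ cycY G v (i + 4), ¬ G.Adj x y := by
  intro i x hx y hy hxy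
  have h2 : G.Adj y (v (i + 2)) := by
    rcases hy with (hy | hy) | hy <;> rw [hy.2] <;>
      clear * - i <;> revert i <;> decide
  have h4 : G.Adj y (v (i + 4)) := by
    rcases hy with (hy | hy) | hy <;> rw [hy.2] <;>
      clear * - i <;> revert i <;> decide
  have e : ∀ i : ZMod 5, ¬ (i + 2 = i ∨ i + 2 = i + 1) ∧ ¬ (i + 4 = i ∨ i + 4 = i + 1) ∧
      ¬ (i + 4 = i + 2 + 1 ∨ i + 2 = i + 4 + 1) ∧ i + 2 ≠ i + 4 := by decide
  obtain ⟨e1, e2, e3, e4⟩ := e i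
  exact no_claw G hclaw y x (v (i + 2)) (v (i + 4)) hxy.symm h2 h4
    (fun h => e1 ((hx.2 _).1 h)) (fun h => e2 ((hx.2 _).1 h)) (fun h => e3 ((hC _ _).1 h))
    (fun h => hx.1 ⟨_, h.symm⟩) (fun h => hx.1 ⟨_, h.symm⟩) (fun h => e4 (hv h))
end

section
/- There is no edge between R and Y: no vertex of G with no neighbor on the cycle C is adjacent to a vertex outside C having exactly four neighbors on C of the form v_i, v_{i+1}, v_{i+2}, v_{i+3}. -/
open SimpleGraph

theorem stmt_7     {V : Type*} [Fintype V] (G : SimpleGraph V)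
    (hconn : G.Connected)
    (hclaw : _root_.Free G claw) (h4K1 : _root_.Free G fourK1) (hK5e : _root_.Free G K5e)
    (hW5 : _root_.Free G wheel5) (hC5t : _root_.Free G C5twin) (hP5t : _root_.Free G P5twin)
    (v : ZMod 5 → V) (hv : Function.Injective v)
    (hC : ∀ i j : ZMod 5, G.Adj (v i) (v j) ↔ (j = i + 1 ∨ i = j + 1)) :
    ∀ r ∈ cycR G v, ∀ y ∈ ⋃ i : ZMod 5, cycY G v i, ¬ G.Adj r y := by
  rintro r ⟨hr1, hr2⟩ y hy hry
  obtain ⟨i, hy1, hy2⟩ := Set.mem_iUnion.1 hy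
  have ya : G.Adj y (v i) := (hy2 i).2 (Or.inl rfl)
  have yb : G.Adj y (v (i + 2)) := (hy2 (i + 2)).2 (Or.inr (Or.inr (Or.inl rfl)))
  have hyr := hry.symm
  have key : ∀ i : ZMod 5, ¬ (i + 2 = i + 1 ∨ i = i + 2 + 1) ∧ i ≠ i + 2 := by decide
  have ab : ¬ G.Adj (v i) (v (i + 2)) := fun h => (key i).1 ((hC _ _).1 h)
  have nab : v i ≠ v (i + 2) := fun h => (key i).2 (hv h)
  have ra := hr2 i
  have rb := hr2 (i + 2)
  have nra : r ≠ v i := fun h => hr1 ⟨i, h.symm⟩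
  have nrb : r ≠ v (i + 2) := fun h => hr1 ⟨i + 2, h.symm⟩
  generalize v i = a at *
  generalize v (i + 2) = b at *
  have ba : ¬ G.Adj b a := fun h => ab h.symm
  have ar : ¬ G.Adj a r := fun h => ra h.symm
  have br : ¬ G.Adj b r := fun h => rb h.symm
  refine hclaw.false ⟨⟨![y, r, a, b], ?_⟩, ?_⟩
  · intro p q h
    have h1 := hyr.ne
    have h2 := ya.ne
    have h3 := yb.ne
    fin_cases p <;> fin_cases q <;> simp_all
  · intro p q
    change G.Adj (![y, r, a, b] p) (![y, r, a, b] q) ↔ claw.Adj p q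
    have h1 := ya.symm
    have h2 := yb.symm
    fin_cases p <;> fin_cases q <;>
      simp [claw, hyr, hry, ya, yb, h1, h2, ab, ba, ar, br, ra, rb]
end

section
/- For every i, the set X_i induces a clique in G: any two distinct vertices outside C whose neighbors on C are exactly v_i and v_{i+1} are adjacent. -/
open SimpleGraph

theorem stmt_8     {V : Type*} [Fintype V] (G : SimpleGraph V)
    (hconn : G.Connected)
    (hclaw : _root_.Free G claw) (h4K1 : _root_.Free G fourK1) (hK5e : _root_.Free G K5e)
    (hW5 : _root_.Free G wheel5) (hC5t : _root_.Free G C5twin) (hP5t : _root_.Free G P5twin)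
    (v : ZMod 5 → V) (hv : Function.Injective v)
    (hC : ∀ i j : ZMod 5, G.Adj (v i) (v j) ↔ (j = i + 1 ∨ i = j + 1)) :
    ∀ i : ZMod 5, G.IsClique (cycX G v i) := by
  intro i x hx y hy hxy
  by_contra hn
  obtain ⟨hx0, hx⟩ := hx
  obtain ⟨hy0, hy⟩ := hy
  have d : ∀ i : ZMod 5, i = i + 4 + 1 ∧ i + 4 ≠ i ∧ i + 4 ≠ i + 1 := by decide
  obtain ⟨d1, d2, d3⟩ := d i
  have e1 : G.Adj (v i) x := ((hx i).2 (Or.inl rfl)).symm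
  have e2 : G.Adj (v i) y := ((hy i).2 (Or.inl rfl)).symm
  have e3 : G.Adj (v i) (v (i + 4)) := (hC _ _).2 (Or.inr d1)
  have n1 : ¬ G.Adj x (v (i + 4)) := fun h => ((hx _).1 h).elim d2 d3
  have n2 : ¬ G.Adj y (v (i + 4)) := fun h => ((hy _).1 h).elim d2 d3
  have q1 : x ≠ v (i + 4) := fun h => hx0 ⟨_, h.symm⟩
  have q2 : y ≠ v (i + 4) := fun h => hy0 ⟨_, h.symm⟩
  have r1 := e1.ne
  have r2 := e2.ne
  have r3 := e3.ne
  refine hclaw.false ⟨⟨![v i, x, y, v (i + 4)], ?_⟩, ?_⟩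
  · intro a b hab
    fin_cases a <;> fin_cases b <;> first | rfl | (exfalso; simp [hxy, hxy.symm, q1, q1.symm, q2, q2.symm, r1, r1.symm, r2, r2.symm, r3, r3.symm] at hab)
  · intro a b
    have n0 : ¬ G.Adj y x := fun h => hn h.symm
    have n1' : ¬ G.Adj (v (i + 4)) x := fun h => n1 h.symm
    have n2' : ¬ G.Adj (v (i + 4)) y := fun h => n2 h.symm
    have e1' := e1.symm
    have e2' := e2.symm
    have e3' := e3.symm
    change G.Adj (![v i, x, y, v (i + 4)] a) (![v i, x, y, v (i + 4)] b) ↔ claw.Adj a b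
    fin_cases a <;> fin_cases b <;> simp [claw, hn, n0, n1, n1', n2, n2', e1, e1', e2, e2', e3, e3']
end

section
/- The set R induces a clique in G: any two distinct vertices of G outside C having no neighbor on C are adjacent. -/
open SimpleGraph

theorem stmt_9     {V : Type*} [Fintype V] (G : SimpleGraph V)
    (hconn : G.Connected)
    (hclaw : _root_.Free G claw) (h4K1 : _root_.Free G fourK1) (hK5e : _root_.Free G K5e)
    (hW5 : _root_.Free G wheel5) (hC5t : _root_.Free G C5twin) (hP5t : _root_.Free G P5twin)
    (v : ZMod 5 → V) (hv : Function.Injective v)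
    (hC : ∀ i j : ZMod 5, G.Adj (v i) (v j) ↔ (j = i + 1 ∨ i = j + 1)) :
    G.IsClique (cycR G v) := by 
  intro a ha b hb hab
  by_contra hn
  obtain ⟨har, haa⟩ := ha
  obtain ⟨hbr, hba⟩ := hb
  have h02 : ¬ G.Adj (v 0) (v 2) := by
    rw [hC]; decide
  have hne : v 0 ≠ v 2 := fun h => absurd (hv h) (by decide)
  have a0 : a ≠ v 0 := fun h => har ⟨0, h.symm⟩
  have a2 : a ≠ v 2 := fun h => har ⟨2, h.symm⟩
  have b0 : b ≠ v 0 := fun h => hbr ⟨0, h.symm⟩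
  have b2 : b ≠ v 2 := fun h => hbr ⟨2, h.symm⟩
  refine h4K1.false ⟨⟨![a, b, v 0, v 2], ?_⟩, ?_⟩
  · intro i j
    fin_cases i <;> fin_cases j <;>
      simp [hab, hab.symm, hne, hne.symm, a0, a2, b0, b2, a0.symm, a2.symm, b0.symm, b2.symm]
  · intro i j
    change G.Adj (![a, b, v 0, v 2] i) (![a, b, v 0, v 2] j) ↔ fourK1.Adj i j
    have hn' : ¬ G.Adj b a := fun h => hn h.symm
    have h20 : ¬ G.Adj (v 2) (v 0) := fun h => h02 h.symm
    have ha' : ∀ j, ¬ G.Adj (v j) a := fun j h => haa j h.symm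
    have hb' : ∀ j, ¬ G.Adj (v j) b := fun j h => hba j h.symm
    fin_cases i <;> fin_cases j <;>
      simp [fourK1, hn, hn', h02, h20, haa, hba, ha', hb']
end

section
/- For every i, every vertex of R is adjacent to every vertex of X_i. -/
open SimpleGraph

theorem stmt_10     {V : Type*} [Fintype V] (G : SimpleGraph V)
    (hconn : G.Connected)
    (hclaw : _root_.Free G claw) (h4K1 : _root_.Free G fourK1) (hK5e : _root_.Free G K5e)
    (hW5 : _root_.Free G wheel5) (hC5t : _root_.Free G C5twin) (hP5t : _root_.Free G P5twin)
    (v : ZMod 5 → V) (hv : Function.Injective v)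
    (hC : ∀ i j : ZMod 5, G.Adj (v i) (v j) ↔ (j = i + 1 ∨ i = j + 1)) :
    ∀ i : ZMod 5, ∀ r ∈ cycR G v, ∀ x ∈ cycX G v i, G.Adj r x := by 
  intro i r hr x hx
  by_contra hrx
  obtain ⟨hrv, hra⟩ := hr
  obtain ⟨hxv, hxa⟩ := hx
  have a1 : ¬ G.Adj x (v (i + 2)) := by
    rw [hxa]; clear * -; revert i; decide
  have a2 : ¬ G.Adj x (v (i + 4)) := by
    rw [hxa]; clear * -; revert i; decide
  have a3 : ¬ G.Adj (v (i + 2)) (v (i + 4)) := by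
    rw [hC]; clear * -; revert i; decide
  have n3 : v (i + 2) ≠ v (i + 4) := by
    intro h
    have h' := hv h
    clear * - h'
    revert i; decide
  have nr : ∀ j, r ≠ v j := fun j h => hrv ⟨j, h.symm⟩
  have nx : ∀ j, x ≠ v j := fun j h => hxv ⟨j, h.symm⟩
  have nrx : r ≠ x := by
    rintro rfl
    exact hra i ((hxa i).2 (Or.inl rfl))
  have b1 := hra (i + 2)
  have b2 := hra (i + 4)
  have c1 := nr (i + 2)
  have c2 := nr (i + 4)
  have d1 := nx (i + 2)
  have d2 := nx (i + 4)
  refine h4K1.false ⟨⟨![r, x, v (i + 2), v (i + 4)], ?_⟩, ?_⟩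
  · intro a b hab
    fin_cases a <;> fin_cases b <;> simp_all [eq_comm]
  · intro a b
    have e1 := mt G.adj_symm hrx
    have e2 := mt G.adj_symm a1
    have e3 := mt G.adj_symm a2
    have e4 := mt G.adj_symm a3
    have e5 := mt G.adj_symm b1
    have e6 := mt G.adj_symm b2
    fin_cases a <;> fin_cases b <;> simp [fourK1] <;> assumption
end

section
/- If R is non-empty, then |X_i| ≤ 2 for every i. -/
open SimpleGraph

theorem stmt_11     {V : Type*} [Fintype V] (G : SimpleGraph V)
    (hconn : G.Connected)
    (hclaw : _root_.Free G claw) (h4K1 : _root_.Free G fourK1) (hK5e : _root_.Free G K5e)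
    (hW5 : _root_.Free G wheel5) (hC5t : _root_.Free G C5twin) (hP5t : _root_.Free G P5twin)
    (v : ZMod 5 → V) (hv : Function.Injective v)
    (hC : ∀ i j : ZMod 5, G.Adj (v i) (v j) ↔ (j = i + 1 ∨ i = j + 1))
    (hR : (cycR G v).Nonempty) :
    ∀ i : ZMod 5, (cycX G v i).ncard ≤ 2 := by 
  classical
  intro i
  obtain ⟨r, hr1, hr2⟩ := hR
  have hrv : ∀ j, r ≠ v j := fun j h => hr1 ⟨j, h.symm⟩
  have hr2' : ∀ j, ¬ G.Adj (v j) r := fun j h => hr2 j h.symm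
  have n1 : ∀ i : ZMod 5, i + 2 ≠ i ∧ i + 2 ≠ i + 1 ∧ i + 4 ≠ i ∧ i + 4 ≠ i + 1 ∧ i + 2 ≠ i + 4 ∧
      i + 4 ≠ i + 2 + 1 ∧ i + 2 ≠ i + 4 + 1 ∧ i = i + 4 + 1 := by decide
  obtain ⟨a1, a2, a3, a4, a5, a6, a7, a8⟩ := n1 i
  have hxv : ∀ x ∈ cycX G v i, ∀ j, x ≠ v j := fun x hx j h => hx.1 ⟨j, h.symm⟩
  have h24 : ¬ G.Adj (v (i + 2)) (v (i + 4)) := by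
    rw [hC]; tauto
  have h0 : ∀ x ∈ cycX G v i, G.Adj x (v i) := fun x hx => (hx.2 i).2 (Or.inl rfl)
  have h2 : ∀ x ∈ cycX G v i, ¬ G.Adj x (v (i + 2)) := fun x hx h => by
    have := (hx.2 _).1 h; tauto
  have h4 : ∀ x ∈ cycX G v i, ¬ G.Adj x (v (i + 4)) := fun x hx h => by
    have := (hx.2 _).1 h; tauto
  have h04 : G.Adj (v i) (v (i + 4)) := (hC _ _).2 (Or.inr a8)
  have hne24 : v (i + 2) ≠ v (i + 4) := fun h => a5 (hv h)
  have hxr : ∀ x ∈ cycX G v i, G.Adj x r := by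
    intro x hx
    by_contra hn
    have hne : x ≠ r := fun h => hr2 i (h ▸ h0 x hx)
    have e2 := hxv x hx (i + 2)
    have e4 := hxv x hx (i + 4)
    have f2 := hrv (i + 2)
    have f4 := hrv (i + 4)
    have g2 := h2 x hx
    have g4 := h4 x hx
    have k2 := hr2 (i + 2)
    have k4 := hr2 (i + 4)
    have hn2 : ¬ G.Adj r x := fun h => hn h.symm
    have g2s : ¬ G.Adj (v (i + 2)) x := fun h => g2 h.symm
    have g4s : ¬ G.Adj (v (i + 4)) x := fun h => g4 h.symm
    have h24s : ¬ G.Adj (v (i + 4)) (v (i + 2)) := fun h => h24 h.symm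
    refine h4K1.false ⟨⟨![x, r, v (i + 2), v (i + 4)], ?_⟩, ?_⟩
    · intro a b hab
      fin_cases a <;> fin_cases b <;> first
        | rfl
        | (exfalso; revert hab; simp [hne, e2, e4, f2, f4, hne24, hne.symm, e2.symm, e4.symm, f2.symm, f4.symm, hne24.symm])
    · intro a b
      change G.Adj (![x, r, v (i + 2), v (i + 4)] a) (![x, r, v (i + 2), v (i + 4)] b) ↔ fourK1.Adj a b
      fin_cases a <;> fin_cases b <;>
        simp [fourK1, hn, g2, g4, k2, k4, h24, hn2, g2s, g4s, h24s, hr2']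
  have hxx : ∀ x ∈ cycX G v i, ∀ y ∈ cycX G v i, x ≠ y → G.Adj x y := by
    intro x hx y hy hne
    by_contra hn
    have hn' : ¬ G.Adj y x := fun h => hn h.symm
    have x0 := h0 x hx
    have y0 := h0 y hy
    have x4 := h4 x hx
    have y4 := h4 y hy
    have x4' : ¬ G.Adj (v (i + 4)) x := fun h => x4 h.symm
    have y4' : ¬ G.Adj (v (i + 4)) y := fun h => y4 h.symm
    have e1 := hxv x hx (i + 4)
    have e2 := hxv y hy (i + 4)
    have e3 := x0.ne
    have e4 := y0.ne
    have e5 := h04.ne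
    refine hclaw.false ⟨⟨![v i, v (i + 4), x, y], ?_⟩, ?_⟩
    · intro a b hab
      fin_cases a <;> fin_cases b <;> first
        | rfl
        | (exfalso; revert hab; simp [e1, e2, e3, e4, e5, hne, e1.symm, e2.symm, e3.symm, e4.symm, e5.symm, hne.symm])
    · intro a b
      change G.Adj (![v i, v (i + 4), x, y] a) (![v i, v (i + 4), x, y] b) ↔ claw.Adj a b
      have x0' := x0.symm
      have y0' := y0.symm
      have h04' := h04.symm
      fin_cases a <;> fin_cases b <;>
        simp [claw, hn, hn', x0, y0, x4, y4, x4', y4', x0', y0', h04, h04']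
  by_contra hcard
  push Not at hcard
  obtain ⟨x, y, z, hx, hy, hz, hxy, hxz, hyz⟩ :=
    (Set.two_lt_ncard_iff (Set.toFinite _)).1 hcard
  have b1 := hxx x hx y hy hxy
  have b2 := hxx x hx z hz hxz
  have b3 := hxx y hy z hz hyz
  have c1 := h0 x hx
  have c2 := h0 y hy
  have c3 := h0 z hz
  have d1 := hxr x hx
  have d2 := hxr y hy
  have d3 := hxr z hz
  have e := hrv i
  refine hK5e.false ⟨⟨![r, v i, x, y, z], ?_⟩, ?_⟩
  · intro a b hab
    fin_cases a <;> fin_cases b <;> first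
        | rfl
        | (exfalso; revert hab; simp [e, b1.ne, b2.ne, b3.ne, c1.ne, c2.ne, c3.ne, d1.ne, d2.ne, d3.ne, e.symm, b1.ne.symm, b2.ne.symm, b3.ne.symm, c1.ne.symm, c2.ne.symm, c3.ne.symm, d1.ne.symm, d2.ne.symm, d3.ne.symm])
  · intro a b
    change G.Adj (![r, v i, x, y, z] a) (![r, v i, x, y, z] b) ↔ K5e.Adj a b
    fin_cases a <;> fin_cases b <;>
      simp [K5e, b1, b2, b3, c1, c2, c3, d1, d2, d3, b1.symm, b2.symm, b3.symm, c1.symm, c2.symm,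
        c3.symm, d1.symm, d2.symm, d3.symm, hr2, hr2']
end

section
/- For any two distinct indices i and j, a vertex in X_i has at most one neighbor in X_j. -/
open SimpleGraph

theorem aux_claw_s12 {V : Type*} {G : SimpleGraph V} (h : _root_.Free G claw) {a b c d : V}
    (hab : G.Adj a b) (hac : G.Adj a c) (had : G.Adj a d)
    (hbc : ¬ G.Adj b c) (hbd : ¬ G.Adj b d) (hcd : ¬ G.Adj c d)
    (nbc : b ≠ c) (nbd : b ≠ d) (ncd : c ≠ d) : False := by
  have n1 := hab.ne
  have n2 := hac.ne
  have n3 := had.ne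
  refine h.false ⟨⟨![a, b, c, d], ?_⟩, ?_⟩
  · intro p q
    fin_cases p <;> fin_cases q <;> simp <;> grind
  · intro p q
    change G.Adj (![a, b, c, d] p) (![a, b, c, d] q) ↔ claw.Adj p q
    fin_cases p <;> fin_cases q <;> simp [claw] <;> grind [G.adj_comm]

theorem aux_K5e {V : Type*} {G : SimpleGraph V} (h : _root_.Free G K5e) {a b c d e : V}
    (hab : ¬ G.Adj a b) (nab : a ≠ b) (hac : G.Adj a c) (had : G.Adj a d) (hae : G.Adj a e)
    (hbc : G.Adj b c) (hbd : G.Adj b d) (hbe : G.Adj b e)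
    (hcd : G.Adj c d) (hce : G.Adj c e) (hde : G.Adj d e) : False := by
  have n1 := hac.ne
  have n2 := had.ne
  have n3 := hae.ne
  have n4 := hbc.ne
  have n5 := hbd.ne
  have n6 := hbe.ne
  have n7 := hcd.ne
  have n8 := hce.ne
  have n9 := hde.ne
  refine h.false ⟨⟨![a, b, c, d, e], ?_⟩, ?_⟩
  · intro p q
    fin_cases p <;> fin_cases q <;> simp <;> grind
  · intro p q
    change G.Adj (![a, b, c, d, e] p) (![a, b, c, d, e] q) ↔ K5e.Adj p q
    fin_cases p <;> fin_cases q <;> simp [K5e] <;> grind [G.adj_comm]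

/-- Cycle `a b c d e`, with `f` a true twin of `a`. -/
theorem aux_C5t {V : Type*} {G : SimpleGraph V} (h : _root_.Free G C5twin) {a b c d e f : V}
    (hab : G.Adj a b) (hbc : G.Adj b c) (hcd : G.Adj c d) (hde : G.Adj d e) (hae : G.Adj a e)
    (hac : ¬ G.Adj a c) (had : ¬ G.Adj a d) (hbd : ¬ G.Adj b d) (hbe : ¬ G.Adj b e)
    (hce : ¬ G.Adj c e) (haf : G.Adj a f) (hbf : G.Adj f b) (hef : G.Adj f e)
    (hcf : ¬ G.Adj f c) (hdf : ¬ G.Adj f d) : False := by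
  have n := @SimpleGraph.Adj.ne V G
  have s := G.adj_comm
  have nac : a ≠ c := by grind
  have nad : a ≠ d := by grind
  have nbd : b ≠ d := by grind
  have nbe : b ≠ e := by grind
  have nce : c ≠ e := by grind
  have nfc : f ≠ c := by grind
  have nfd : f ≠ d := by grind
  have n1 := hab.ne
  have n2 := hbc.ne
  have n3 := hcd.ne
  have n4 := hde.ne
  have n5 := hae.ne
  have n6 := haf.ne
  have n7 := hbf.ne
  have n8 := hef.ne
  clear n s
  refine h.false ⟨⟨![a, b, c, d, e, f], ?_⟩, ?_⟩
  · intro p q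
    fin_cases p <;> fin_cases q <;> simp <;> grind
  · intro p q
    change G.Adj (![a, b, c, d, e, f] p) (![a, b, c, d, e, f] q) ↔ C5twin.Adj p q
    fin_cases p <;> fin_cases q <;> simp [C5twin] <;> grind [G.adj_comm]

theorem stmt_12     {V : Type*} [Fintype V] (G : SimpleGraph V)
    (hconn : G.Connected)
    (hclaw : _root_.Free G claw) (h4K1 : _root_.Free G fourK1) (hK5e : _root_.Free G K5e)
    (hW5 : _root_.Free G wheel5) (hC5t : _root_.Free G C5twin) (hP5t : _root_.Free G P5twin)
    (v : ZMod 5 → V) (hv : Function.Injective v)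
    (hC : ∀ i j : ZMod 5, G.Adj (v i) (v j) ↔ (j = i + 1 ∨ i = j + 1)) :
    ∀ i j : ZMod 5, i ≠ j → ∀ x ∈ cycX G v i, ∀ b ∈ cycX G v j, ∀ c ∈ cycX G v j,
      G.Adj x b → G.Adj x c → b = c := by
  intro i j hij x hx b hb c hc hxb hxc
  by_contra hbc'
  have hx := hx.2
  have hb2 := hb.2
  have hc2 := hc.2
  have hbc : G.Adj b c := by
    by_contra hn
    have e1 : ∀ j : ZMod 5, ¬ (j + 4 = j ∨ j + 4 = j + 1) := by decide
    have e2 : ∀ j : ZMod 5, j + 4 = j + 1 ∨ j = j + 4 + 1 := by decide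
    refine aux_claw_s12 hclaw (a := v j) (b := b) (c := c) (d := v (j + 4))
      ((hb2 _).2 (by simp)).symm ((hc2 _).2 (by simp)).symm ((hC _ _).2 (e2 j)) hn
      (fun h => e1 j ((hb2 _).1 h)) (fun h => e1 j ((hc2 _).1 h)) hbc'
      (fun h => hb.1 ⟨_, h.symm⟩) (fun h => hc.1 ⟨_, h.symm⟩)
  have key : ∀ i j : ZMod 5, i ≠ j → j = i + 1 ∨ i = j + 1 ∨ j = i + 2 ∨ i = j + 2 := by decide
  rcases key i j hij with rfl | rfl | rfl | rfl
  · have e1 : ¬ G.Adj x (v (i + 2)) := fun h => by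
      have := (hx _).1 h; revert this; clear * -; revert i; decide
    have e2 : G.Adj b (v (i + 2)) := (hb2 _).2 (by clear * -; revert i; decide)
    have e3 : G.Adj c (v (i + 2)) := (hc2 _).2 (by clear * -; revert i; decide)
    have e4 : G.Adj (v (i + 2)) (v (i + 1)) := (hC _ _).2 (by clear * -; revert i; decide)
    refine aux_K5e hK5e (a := x) (b := v (i + 2)) (c := v (i + 1)) (d := b) (e := c) e1
      (fun h => ?_) ((hx _).2 (by simp)) hxb hxc e4 e2.symm e3.symm
      ((hb2 _).2 (by simp)).symm ((hc2 _).2 (by simp)).symm hbc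
    have e5 : G.Adj x (v (i + 0)) := (hx _).2 (by simp)
    rw [h] at e5
    have := (hC _ _).1 e5
    revert this; clear * -; revert i; decide
  · have e1 : ¬ G.Adj x (v j) := fun h => by
      have := (hx _).1 h; revert this; clear * -; revert j; decide
    refine aux_K5e hK5e (a := x) (b := v j) (c := v (j + 1)) (d := b) (e := c) e1
      (fun h => ?_) ((hx _).2 (by simp)) hxb hxc ((hC _ _).2 (by simp))
      ((hb2 _).2 (by simp)).symm ((hc2 _).2 (by simp)).symm
      ((hb2 _).2 (by simp)).symm ((hc2 _).2 (by simp)).symm hbc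
    have e5 : G.Adj x (v (j + 2)) := (hx _).2 (by clear * -; revert j; decide)
    rw [h] at e5
    have := (hC _ _).1 e5
    revert this; clear * -; revert j; decide
  · refine aux_C5t hC5t (a := b) (b := v (i + 3)) (c := v (i + 4)) (d := v i) (e := x) (f := c)
      ?_ ?_ ?_ (SimpleGraph.Adj.symm ?_) hxb.symm ?_ ?_ ?_ (fun h => ?_) (fun h => ?_) hbc ?_ hxc.symm ?_ ?_
    case refine_8 => have := (hx _).1 h.symm; revert this; clear * -; revert i; decide
    case refine_9 => have := (hx _).1 h.symm; revert this; clear * -; revert i; decide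
    all_goals
      simp only [hx, hb2, hc2, hC]
      clear * -; revert i; decide
  · refine aux_C5t hC5t (a := b) (b := v j) (c := v (j + 4)) (d := v (j + 3)) (e := x) (f := c)
      ?_ ?_ ?_ (SimpleGraph.Adj.symm ?_) hxb.symm ?_ ?_ ?_ (fun h => ?_) (fun h => ?_) hbc ?_ hxc.symm ?_ ?_
    case refine_8 => have := (hx _).1 h.symm; revert this; clear * -; revert j; decide
    case refine_9 => have := (hx _).1 h.symm; revert this; clear * -; revert j; decide
    all_goals
      simp only [hx, hb2, hc2, hC]
      clear * -; revert j; decide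
end

section
/- For every i, a vertex in X_i cannot have two non-adjacent neighbors in X − X_i: if x ∈ X_i is adjacent to vertices u, w ∈ X with u, w ∉ X_i and u ≠ w, then u and w are adjacent. -/
open SimpleGraph

lemma no_claw_s15 {V : Type*} {G : SimpleGraph V} (h : _root_.Free G claw) {a b c d : V}
    (hb : G.Adj a b) (hc : G.Adj a c) (hd : G.Adj a d) (bc : b ≠ c) (bd : b ≠ d) (cd : c ≠ d)
    (nbc : ¬ G.Adj b c) (nbd : ¬ G.Adj b d) (ncd : ¬ G.Adj c d) : False := by
  refine h.false ⟨⟨![a, b, c, d], ?_⟩, ?_⟩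
  · have := hb.ne
    have := hc.ne
    have := hd.ne
    intro p q
    fin_cases p <;> fin_cases q <;> simp_all [eq_comm]
  · intro p q
    change G.Adj (![a, b, c, d] p) (![a, b, c, d] q) ↔ claw.Adj p q
    have := hb.symm
    have := hc.symm
    have := hd.symm
    have : ¬ G.Adj c b := fun h => nbc h.symm
    have : ¬ G.Adj d b := fun h => nbd h.symm
    have : ¬ G.Adj d c := fun h => ncd h.symm
    fin_cases p <;> fin_cases q <;> simp [claw, *]

lemma no_P5twin {V : Type*} {G : SimpleGraph V} (h : _root_.Free G P5twin) (f : Fin 6 → V)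
    (hf : ∀ p q, p < q → (G.Adj (f p) (f q) ↔ P5twin.Adj p q)) : False := by
  have hf' : ∀ p q, G.Adj (f p) (f q) ↔ P5twin.Adj p q := by
    intro p q
    rcases lt_trichotomy p q with h | h | h
    · exact hf p q h
    · subst h; simp
    · rw [G.adj_comm, P5twin.adj_comm]; exact hf q p h
  refine h.false ⟨⟨f, ?_⟩, fun {p q} => hf' p q⟩
  intro p q hpq
  have key : ∀ r, P5twin.Adj p r ↔ P5twin.Adj q r := fun r => by
    rw [← hf', ← hf', hpq]
  have k0 := key 0
  have k1 := key 1
  have k3 := key 3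
  have k4 := key 4
  have k5 := key 5
  clear hpq key
  revert k0 k1 k3 k4 k5
  fin_cases p <;> fin_cases q <;> simp [P5twin]

lemma main_case {V : Type*} {G : SimpleGraph V} (hP5t : _root_.Free G P5twin)
    (v : ZMod 5 → V)
    (hC : ∀ i j : ZMod 5, G.Adj (v i) (v j) ↔ (j = i + 1 ∨ i = j + 1))
    (i : ZMod 5) {x u w : V} (hx : x ∈ cycX G v i) (hu : u ∈ cycX G v (i - 1))
    (hw : w ∈ cycX G v (i + 1)) (xu : G.Adj x u) (xw : G.Adj x w) : G.Adj u w := by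
  by_contra huw
  obtain ⟨-, hx⟩ := hx
  obtain ⟨-, hu⟩ := hu
  obtain ⟨-, hw⟩ := hw
  have hx' : ∀ j, G.Adj (v j) x ↔ _ := fun j => (G.adj_comm _ _).trans (hx j)
  have hu' : ∀ j, G.Adj (v j) u ↔ _ := fun j => (G.adj_comm _ _).trans (hu j)
  have hw' : ∀ j, G.Adj (v j) w ↔ _ := fun j => (G.adj_comm _ _).trans (hw j)
  have hwu : ¬ G.Adj w u := fun h => huw h.symm
  refine no_P5twin hP5t ![v (i + 3), v (i + 4), v i, x, w, u] ?_
  intro p q hpq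
  fin_cases p <;> fin_cases q <;> first
    | (exfalso; revert hpq; decide)
    | (simp [P5twin, hC, hx', hu', hw', xu, xw, hwu]; try (clear * - i; revert i; decide))

theorem stmt_15     {V : Type*} [Fintype V] (G : SimpleGraph V)
    (hconn : G.Connected)
    (hclaw : _root_.Free G claw) (h4K1 : _root_.Free G fourK1) (hK5e : _root_.Free G K5e)
    (hW5 : _root_.Free G wheel5) (hC5t : _root_.Free G C5twin) (hP5t : _root_.Free G P5twin)
    (v : ZMod 5 → V) (hv : Function.Injective v)
    (hC : ∀ i j : ZMod 5, G.Adj (v i) (v j) ↔ (j = i + 1 ∨ i = j + 1)) :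
    ∀ i : ZMod 5, ∀ x ∈ cycX G v i,
      ∀ u ∈ ⋃ j : ZMod 5, cycX G v j, ∀ w ∈ ⋃ j : ZMod 5, cycX G v j,
        u ∉ cycX G v i → w ∉ cycX G v i → u ≠ w →
          G.Adj x u → G.Adj x w → G.Adj u w := by
  intro i x hx u hu w hw hui hwi huw xu xw
  by_contra hn
  obtain ⟨j, hj⟩ := Set.mem_iUnion.1 hu
  obtain ⟨k, hk⟩ := Set.mem_iUnion.1 hw
  have hji : j ≠ i := by rintro rfl; exact hui hj
  have hki : k ≠ i := by rintro rfl; exact hwi hk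
  have step : ∀ m, (m = i ∨ m = i + 1) → G.Adj u (v m) ∨ G.Adj w (v m) := by
    intro m hm
    by_contra hcon
    push Not at hcon
    exact no_claw_s15 hclaw xu xw ((hx.2 m).2 hm) huw
      (fun h => hj.1 ⟨m, h.symm⟩) (fun h => hk.1 ⟨m, h.symm⟩) hn hcon.1 hcon.2
  have h0 := step i (Or.inl rfl)
  have h1 := step (i + 1) (Or.inr rfl)
  rw [hj.2, hk.2] at h0 h1
  have comb : ∀ i j k : ZMod 5, j ≠ i → k ≠ i → ((i = j ∨ i = j + 1) ∨ (i = k ∨ i = k + 1)) →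
      ((i + 1 = j ∨ i + 1 = j + 1) ∨ (i + 1 = k ∨ i + 1 = k + 1)) →
      (j = i - 1 ∧ k = i + 1) ∨ (j = i + 1 ∧ k = i - 1) := by decide
  rcases comb i j k hji hki h0 h1 with ⟨rfl, rfl⟩ | ⟨rfl, rfl⟩
  · exact hn (main_case hP5t v hC i hx hj hk xu xw)
  · exact hn (main_case hP5t v hC i hx hk hj xw xu).symm
end

section
/- Suppose X_i, X_{i+1}, X_{i+2} are each non-empty for some i. If |X_j| ≥ 3 for some j ∈ {i, i+1, i+2}, then |X_k| = |X_ℓ| = 1 where {j, k, ℓ} = {i, i+1, i+2}. -/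
open SimpleGraph

section Helpers

variable {V : Type*} {G : SimpleGraph V}

theorem free_false {W : Type*} {H : SimpleGraph W} (h : _root_.Free G H) (f : W → V)
    (hf : Function.Injective f) (hadj : ∀ a b, G.Adj (f a) (f b) ↔ H.Adj a b) : False :=
  h.false ⟨⟨f, hf⟩, by intro a b; exact hadj a b⟩

theorem no_claw_s16 (h : _root_.Free G claw) {a b c d : V} (hab : G.Adj a b) (hac : G.Adj a c)
    (had : G.Adj a d) (hbc : ¬ G.Adj b c) (hbd : ¬ G.Adj b d) (hcd : ¬ G.Adj c d)
    (h1 : b ≠ c) (h2 : b ≠ d) (h3 : c ≠ d) : False := by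
  have := hab.ne
  have := hac.ne
  have := had.ne
  refine free_false h ![a, b, c, d] ?_ ?_
  · intro x y
    fin_cases x <;> fin_cases y <;> simp <;> grind
  · intro x y
    fin_cases x <;> fin_cases y <;> simp [claw] <;> grind [SimpleGraph.adj_comm]

theorem no_fourK1 (h : _root_.Free G fourK1) {a b c d : V} (hab : ¬ G.Adj a b)
    (hac : ¬ G.Adj a c) (had : ¬ G.Adj a d) (hbc : ¬ G.Adj b c) (hbd : ¬ G.Adj b d)
    (hcd : ¬ G.Adj c d) (h1 : b ≠ c) (h2 : b ≠ d) (h3 : c ≠ d)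
    (h4 : a ≠ b) (h5 : a ≠ c) (h6 : a ≠ d) : False := by
  refine free_false h ![a, b, c, d] ?_ ?_
  · intro x y
    fin_cases x <;> fin_cases y <;> simp <;> grind
  · intro x y
    fin_cases x <;> fin_cases y <;> simp [fourK1] <;> grind [SimpleGraph.adj_comm]

theorem no_K5e (h : _root_.Free G K5e) {a b c d e : V} (hab : ¬ G.Adj a b) (hne : a ≠ b)
    (hac : G.Adj a c) (had : G.Adj a d) (hae : G.Adj a e)
    (hbc : G.Adj b c) (hbd : G.Adj b d) (hbe : G.Adj b e)
    (hcd : G.Adj c d) (hce : G.Adj c e) (hde : G.Adj d e) : False := by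
  have := hac.ne
  have := had.ne
  have := hae.ne
  have := hbc.ne
  have := hbd.ne
  have := hbe.ne
  have := hcd.ne
  have := hce.ne
  have := hde.ne
  refine free_false h ![a, b, c, d, e] ?_ ?_
  · intro x y
    fin_cases x <;> fin_cases y <;> simp <;> grind
  · intro x y
    fin_cases x <;> fin_cases y <;> simp [K5e] <;> grind [SimpleGraph.adj_comm]

theorem no_C5twin (h : _root_.Free G C5twin) {a b c d e t : V}
    (hab : G.Adj a b) (hbc : G.Adj b c) (hcd : G.Adj c d) (hde : G.Adj d e) (hea : G.Adj e a)
    (hac : ¬ G.Adj a c) (had : ¬ G.Adj a d) (hbd : ¬ G.Adj b d) (hbe : ¬ G.Adj b e)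
    (hce : ¬ G.Adj c e) (hta : G.Adj t a) (htb : G.Adj t b) (hte : G.Adj t e)
    (htc : ¬ G.Adj t c) (htd : ¬ G.Adj t d) : False := by
  have hs : ∀ x y, G.Adj x y → G.Adj y x := fun x y h => h.symm
  have hirr : ∀ x, ¬ G.Adj x x := fun x => G.irrefl
  refine free_false h ![a, b, c, d, e, t] ?_ ?_
  · intro x y
    fin_cases x <;> fin_cases y <;> simp <;> grind
  · intro x y
    fin_cases x <;> fin_cases y <;> simp [C5twin] <;> grind

theorem X_clique (hclaw : _root_.Free G claw) {v : ZMod 5 → V}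
    (hC : ∀ i j : ZMod 5, G.Adj (v i) (v j) ↔ (j = i + 1 ∨ i = j + 1))
    {p : ZMod 5} {x y : V} (hx : x ∈ cycX G v p) (hy : y ∈ cycX G v p) (hxy : x ≠ y) :
    G.Adj x y := by
  by_contra hn
  refine no_claw_s16 hclaw (a := v p) (b := v (p + 4)) (c := x) (d := y) ?_ ?_ ?_ ?_ ?_ hn ?_ ?_ hxy
  · rw [hC]; clear hx hy; revert p; decide
  · exact ((hx.2 p).2 (Or.inl rfl)).symm
  · exact ((hy.2 p).2 (Or.inl rfl)).symm
  · rw [G.adj_comm, hx.2]; clear hx hy; revert p; decide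
  · rw [G.adj_comm, hy.2]; clear hx hy; revert p; decide
  · rintro rfl; exact hx.1 ⟨_, rfl⟩
  · rintro rfl; exact hy.1 ⟨_, rfl⟩

theorem not_both (hclaw : _root_.Free G claw) (hK5e : _root_.Free G K5e)
    (hC5t : _root_.Free G C5twin) {v : ZMod 5 → V}
    (hC : ∀ i j : ZMod 5, G.Adj (v i) (v j) ↔ (j = i + 1 ∨ i = j + 1))
    {p q : ZMod 5} (hpq : p ≠ q) {x y z : V} (hx : x ∈ cycX G v p) (hy : y ∈ cycX G v p)
    (hxy : x ≠ y) (hz : z ∈ cycX G v q) (hxz : G.Adj x z) (hyz : G.Adj y z) : False := by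
  have hxy' := X_clique hclaw hC hx hy hxy
  have hv : ∀ w, w ∈ Set.range v → w ≠ z := by
    rintro w hw rfl; exact hz.1 hw
  have hq : q = p + 1 ∨ q = p + 4 ∨ q = p + 2 ∨ q = p + 3 := by
    clear hx hy hz; revert p q; decide
  have hx2 : ∀ j, G.Adj (v j) x ↔ (j = p ∨ j = p + 1) := fun j => by rw [G.adj_comm, hx.2]
  have hy2 : ∀ j, G.Adj (v j) y ↔ (j = p ∨ j = p + 1) := fun j => by rw [G.adj_comm, hy.2]
  have hz2 : ∀ j, G.Adj (v j) z ↔ (j = q ∨ j = q + 1) := fun j => by rw [G.adj_comm, hz.2]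
  rcases hq with rfl | rfl | rfl | rfl
  · refine no_K5e hK5e (a := v p) (b := z) (c := v (p + 1)) (d := x) (e := y) ?_ (hv _ ⟨_, rfl⟩)
      ?_ ?_ ?_ ?_ hxz.symm hyz.symm ?_ ?_ hxy'
    all_goals simp only [hC, hx2, hy2, hz2, hz.2]
    all_goals clear hx hy hz hx2 hy2 hz2 hpq; revert p; decide
  · refine no_K5e hK5e (a := v (p + 1)) (b := z) (c := v p) (d := x) (e := y) ?_ (hv _ ⟨_, rfl⟩)
      ?_ ?_ ?_ ?_ hxz.symm hyz.symm ?_ ?_ hxy'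
    all_goals simp only [hC, hx2, hy2, hz2, hz.2]
    all_goals clear hx hy hz hx2 hy2 hz2 hpq; revert p; decide
  · refine no_C5twin hC5t (a := x) (b := v p) (c := v (p + 4)) (d := v (p + 3)) (e := z) (t := y)
      ?_ ?_ ?_ ?_ hxz.symm ?_ ?_ ?_ ?_ ?_ hxy'.symm ?_ hyz ?_ ?_
    all_goals simp only [hC, hx.2, hy.2, hz2]
    all_goals clear hx hy hz hx2 hy2 hz2 hpq; revert p; decide
  · refine no_C5twin hC5t (a := x) (b := v (p + 1)) (c := v (p + 2)) (d := v (p + 3)) (e := z)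
      (t := y) ?_ ?_ ?_ ?_ hxz.symm ?_ ?_ ?_ ?_ ?_ hxy'.symm ?_ hyz ?_ ?_
    all_goals simp only [hC, hx.2, hy.2, hz2]
    all_goals clear hx hy hz hx2 hy2 hz2 hpq; revert p; decide

theorem X_disj {v : ZMod 5 → V} {p q : ZMod 5} (hpq : p ≠ q) {x y : V}
    (hx : x ∈ cycX G v p) (hy : y ∈ cycX G v q) : x ≠ y := by
  rintro rfl
  have h : ∀ j, (j = p ∨ j = p + 1) ↔ (j = q ∨ j = q + 1) := fun j =>
    (hx.2 j).symm.trans (hy.2 j)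
  clear hx hy
  revert p q
  decide

theorem some_edge (h4K1 : _root_.Free G fourK1) {v : ZMod 5 → V} {i : ZMod 5} {x y z : V}
    (hx : x ∈ cycX G v i) (hy : y ∈ cycX G v (i + 1)) (hz : z ∈ cycX G v (i + 2)) :
    G.Adj x y ∨ G.Adj y z ∨ G.Adj x z := by
  by_contra! hn
  obtain ⟨h1, h2, h3⟩ := hn
  refine no_fourK1 h4K1 (a := x) (b := y) (c := z) (d := v (i + 4)) h1 h3 ?_ h2 ?_ ?_
    (X_disj ?_ hy hz) ?_ ?_ (X_disj ?_ hx hy) (X_disj ?_ hx hz) ?_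
  · rw [hx.2]; clear hx hy hz; revert i; decide
  · rw [hy.2]; clear hx hy hz; revert i; decide
  · rw [hz.2]; clear hx hy hz; revert i; decide
  · clear hx hy hz; revert i; decide
  · rintro rfl; exact hy.1 ⟨_, rfl⟩
  · rintro rfl; exact hz.1 ⟨_, rfl⟩
  · clear hx hy hz; revert i; decide
  · clear hx hy hz; revert i; decide
  · rintro rfl; exact hx.1 ⟨_, rfl⟩

theorem exists_third : ∀ i j k : ZMod 5, (j = i ∨ j = i + 1 ∨ j = i + 2) →
    (k = i ∨ k = i + 1 ∨ k = i + 2) →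
    ∃ l : ZMod 5, (l = i ∨ l = i + 1 ∨ l = i + 2) ∧ l ≠ j ∧ l ≠ k := by
  intro i j k hj hk
  have h : ∀ a b : ZMod 5, (a = 0 ∨ a = 1 ∨ a = 2) → (b = 0 ∨ b = 1 ∨ b = 2) →
    ∃ c : ZMod 5, (c = 0 ∨ c = 1 ∨ c = 2) ∧ c ≠ a ∧ c ≠ b := by decide
  obtain ⟨c, hc, hca, hcb⟩ := h (j - i) (k - i) (by grind) (by grind)
  exact ⟨c + i, by grind, by grind, by grind⟩

end Helpers

theorem stmt_16     {V : Type*} [Fintype V] (G : SimpleGraph V)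
    (hconn : G.Connected)
    (hclaw : _root_.Free G claw) (h4K1 : _root_.Free G fourK1) (hK5e : _root_.Free G K5e)
    (hW5 : _root_.Free G wheel5) (hC5t : _root_.Free G C5twin) (hP5t : _root_.Free G P5twin)
    (v : ZMod 5 → V) (hv : Function.Injective v)
    (hC : ∀ i j : ZMod 5, G.Adj (v i) (v j) ↔ (j = i + 1 ∨ i = j + 1))
    (i : ZMod 5)
    (hne : (cycX G v i).Nonempty ∧ (cycX G v (i + 1)).Nonempty ∧ (cycX G v (i + 2)).Nonempty)
    (j : ZMod 5) (hj : j ∈ ({i, i + 1, i + 2} : Set (ZMod 5)))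
    (hbig : 3 ≤ (cycX G v j).ncard) :
    ∀ k ∈ ({i, i + 1, i + 2} : Set (ZMod 5)), k ≠ j → (cycX G v k).ncard = 1 := by
  classical
  intro k hk hkj
  obtain ⟨l, hl, hlj, hlk⟩ : ∃ l ∈ ({i, i + 1, i + 2} : Set (ZMod 5)), l ≠ j ∧ l ≠ k := by
    simp only [Set.mem_insert_iff, Set.mem_singleton_iff] at hj hk ⊢
    exact exists_third i j k hj hk
  have hN : ∀ m ∈ ({i, i + 1, i + 2} : Set (ZMod 5)), (cycX G v m).Nonempty := by
    rintro m (rfl | rfl | rfl)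
    · exact hne.1
    · exact hne.2.1
    · exact hne.2.2
  have hs : ∀ x y, G.Adj x y → G.Adj y x := fun x y h => h.symm
  have hE : ∀ a ∈ cycX G v j, ∀ b ∈ cycX G v k, ∀ c ∈ cycX G v l,
      G.Adj a b ∨ G.Adj b c ∨ G.Adj a c := by
    intro a ha b hb c hc
    have key := fun x y z => some_edge (i := i) (x := x) (y := y) (z := z) h4K1 (v := v)
    rcases hj with rfl | rfl | rfl <;> rcases hk with rfl | rfl | rfl <;>
      rcases hl with rfl | rfl | rfl <;> first | contradiction | skip
    · have := key a b c ha hb hc; grind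
    · have := key a c b ha hc hb; grind
    · have := key b a c hb ha hc; grind
    · have := key c a b hc ha hb; grind
    · have := key b c a hb hc ha; grind
    · have := key c b a hc hb ha; grind
  by_contra hcard
  have h0 : 0 < (cycX G v k).ncard := (Set.ncard_pos).2 (hN k hk)
  obtain ⟨b1, hb1, b2, hb2, hb⟩ := (Set.one_lt_ncard (Set.toFinite _)).1
    (show 1 < (cycX G v k).ncard by omega)
  obtain ⟨a1, a2, a3, ha1, ha2, ha3, h12, h13, h23⟩ := (Set.two_lt_ncard_iff (Set.toFinite _)).1
    (show 2 < (cycX G v j).ncard by omega)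
  obtain ⟨c, hc⟩ := hN l hl
  have nb : ∀ {p q : ZMod 5}, p ≠ q → ∀ {x y z : V}, x ∈ cycX G v p → y ∈ cycX G v p →
      x ≠ y → z ∈ cycX G v q → ¬ (G.Adj x z ∧ G.Adj y z) :=
    fun hpq _ _ _ hx hy hxy hz h => not_both hclaw hK5e hC5t hC hpq hx hy hxy hz h.1 h.2
  -- some vertex of `X_k` is not adjacent to `c`
  obtain ⟨b, hbk, hbc⟩ : ∃ b ∈ cycX G v k, ¬ G.Adj b c := by
    by_contra! hall
    exact nb hlk.symm hb1 hb2 hb hc ⟨hall _ hb1, hall _ hb2⟩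
  have e1 := hE a1 ha1 b hbk c hc
  have e2 := hE a2 ha2 b hbk c hc
  have e3 := hE a3 ha3 b hbk c hc
  have n1 := nb hkj.symm ha1 ha2 h12 hbk
  have n2 := nb hkj.symm ha1 ha3 h13 hbk
  have n3 := nb hkj.symm ha2 ha3 h23 hbk
  have m1 := nb hlj.symm ha1 ha2 h12 hc
  have m2 := nb hlj.symm ha1 ha3 h13 hc
  have m3 := nb hlj.symm ha2 ha3 h23 hc
  clear nb hE hN hs
  grind
end
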